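/- There exists a function C : ℝ × ℝ → ℝ such that for every T > 0 and every smooth solution u of the 1-dimensional Schrödinger flow with Neumann boundary conditions on [0,T] with initial data u₀ = u(·,0), one has sup_{t ∈ [0,T]} ( ‖u(·,t)‖²_{H⁵} + ‖∂_t u(·,t)‖²_{H³} + ‖∂_t²u(·,t)‖²_{H¹} ) ≤ C(‖u₀‖_{H⁵}, T). -/

import Mathlib

open MeasureTheory Set

noncomputable section

abbrev E3 := EuclideanSpace ℝ (Fin 3)

/-- The cross product on `EuclideanSpace ℝ (Fin 3)`. -/
def cross3 (a b : E3) : E3 :=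
  (WithLp.equiv 2 (Fin 3 → ℝ)).symm
    (crossProduct ((WithLp.equiv 2 (Fin 3 → ℝ)) a) ((WithLp.equiv 2 (Fin 3 → ℝ)) b))

/-- Partial derivative in the space variable of `u = u x t`. -/
def pdx (u : ℝ → ℝ → E3) : ℝ → ℝ → E3 := fun x t => deriv (fun y => u y t) x

/-- Partial derivative in the time variable of `u = u x t`. -/
def pdt (u : ℝ → ℝ → E3) : ℝ → ℝ → E3 := fun x t => deriv (fun s => u x s) t

/-- `u` is a smooth solution of the 1-dimensional Schrödinger flow with Neumann
boundary conditions on `[0,1] × [0,T]`. -/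
def IsSol (T : ℝ) (u : ℝ → ℝ → E3) : Prop :=
  ContDiff ℝ (⊤ : ℕ∞) (fun p : ℝ × ℝ => u p.1 p.2) ∧
  (∀ x ∈ Icc (0:ℝ) 1, ∀ t ∈ Icc (0:ℝ) T, ‖u x t‖ = 1) ∧
  (∀ x ∈ Icc (0:ℝ) 1, ∀ t ∈ Icc (0:ℝ) T, pdt u x t = cross3 (u x t) (pdx (pdx u) x t)) ∧
  (∀ t ∈ Icc (0:ℝ) T, pdx u 0 t = 0 ∧ pdx u 1 t = 0)

/-- Squared `L²` norm on `[0,1]`. -/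
def L2sq (f : ℝ → E3) : ℝ := ∫ x in (0:ℝ)..1, ‖f x‖ ^ 2

/-- Squared `H^k` Sobolev norm on `[0,1]`. -/
def Hsq (k : ℕ) (f : ℝ → E3) : ℝ :=
  ∑ j ∈ Finset.range (k + 1), ∫ x in (0:ℝ)..1, ‖deriv^[j] f x‖ ^ 2

/-!
The space derivatives of odd order vanish at both ends of `[0,1]`: the equation propagates the
Neumann condition from order `n` to order `n + 2`. Integrating by parts in the derivative of
`‖∂ₓᵏ u‖²_{L²}` therefore leaves no boundary terms. The terms of top order that remain are triple
products of `∂ₓ u` with two consecutive derivatives of high order; since `u` is a unit vector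
orthogonal to `∂ₓ u`, Cramer's rule turns them into exact derivatives up to lower order terms.

This makes `‖∂ₓ u‖²_{L²}` and `‖∂ₓ² u‖²_{L²} - (5/4) ∫ ‖∂ₓ u‖⁴` conserved, and in each order `k ≥ 3`
it leaves an inequality that is linear in `‖∂ₓᵏ u‖²_{L²}` once the lower orders are bounded, so that
Grönwall's lemma applies. The time derivatives are expressed through space derivatives by the
equation.
-/

open Filter
open Finset.HasAntidiagonal (antidiagonal)
open scoped ContDiff InnerProductSpace

/-! ### The cross product and the triple product -/

lemma cross3_apply_zero (a b : E3) : cross3 a b 0 = a 1 * b 2 - a 2 * b 1 := by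
  simp [cross3, crossProduct]

lemma cross3_apply_one (a b : E3) : cross3 a b 1 = a 2 * b 0 - a 0 * b 2 := by
  simp [cross3, crossProduct]

lemma cross3_apply_two (a b : E3) : cross3 a b 2 = a 0 * b 1 - a 1 * b 0 := by
  simp [cross3, crossProduct]

lemma E3_inner_eq (a b : E3) : ⟪a, b⟫_ℝ = a 0 * b 0 + a 1 * b 1 + a 2 * b 2 := by
  simp [PiLp.inner_apply, Fin.sum_univ_three, mul_comm]

lemma E3_norm_sq_eq (a : E3) : ‖a‖ ^ 2 = a 0 * a 0 + a 1 * a 1 + a 2 * a 2 := by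
  rw [← real_inner_self_eq_norm_sq, E3_inner_eq]

lemma norm_cross3_sq (a b : E3) : ‖cross3 a b‖ ^ 2 = ‖a‖ ^ 2 * ‖b‖ ^ 2 - ⟪a, b⟫_ℝ ^ 2 := by
  simp only [E3_norm_sq_eq, E3_inner_eq, cross3_apply_zero, cross3_apply_one, cross3_apply_two]
  ring

lemma norm_cross3_le (a b : E3) : ‖cross3 a b‖ ≤ ‖a‖ * ‖b‖ := by
  refine le_of_sq_le_sq ?_ (by positivity)
  rw [norm_cross3_sq, mul_pow]
  exact sub_le_self _ (sq_nonneg _)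

lemma eq_zero_of_cross3_eq_zero_of_inner_eq_zero {a b : E3} (ha : ‖a‖ = 1)
    (hcross : cross3 a b = 0) (hinner : ⟪a, b⟫_ℝ = 0) : b = 0 := by
  have h := norm_cross3_sq a b
  rw [hcross, hinner, ha] at h
  simpa using h.symm

/-- The cross product as a continuous bilinear map. -/
def cross3L : E3 →L[ℝ] E3 →L[ℝ] E3 :=
  LinearMap.mkContinuous₂
    (LinearMap.mk₂ ℝ cross3
      (fun a a' b => by simp [cross3])
      (fun r a b => by simp [cross3])
      (fun a b b' => by simp [cross3])
      (fun r a b => by simp [cross3]))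
    1 (fun a b => by simpa using norm_cross3_le a b)

@[simp] lemma cross3L_apply (a b : E3) : cross3L a b = cross3 a b := rfl

@[simp] lemma cross3_zero_left (b : E3) : cross3 0 b = 0 := by
  rw [← cross3L_apply, map_zero, zero_apply]

@[simp] lemma cross3_zero_right (a : E3) : cross3 a 0 = 0 := by
  rw [← cross3L_apply, map_zero]

/-- The scalar triple product `a · (b × c)`. -/
def tripleProduct (a b c : E3) : ℝ := ⟪a, cross3 b c⟫_ℝ

lemma tripleProduct_eq (a b c : E3) :
    tripleProduct a b c = a 0 * (b 1 * c 2 - b 2 * c 1) + a 1 * (b 2 * c 0 - b 0 * c 2)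
      + a 2 * (b 0 * c 1 - b 1 * c 0) := by
  rw [tripleProduct, E3_inner_eq, cross3_apply_zero, cross3_apply_one, cross3_apply_two]

@[simp] lemma tripleProduct_self_left (a b : E3) : tripleProduct a a b = 0 := by
  rw [tripleProduct_eq]; ring

@[simp] lemma tripleProduct_self_right (a b : E3) : tripleProduct a b b = 0 := by
  rw [tripleProduct_eq]; ring

@[simp] lemma tripleProduct_self_outer (a b : E3) : tripleProduct a b a = 0 := by
  rw [tripleProduct_eq]; ring

@[simp] lemma tripleProduct_zero_left (b c : E3) : tripleProduct 0 b c = 0 := by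
  simp [tripleProduct]

@[simp] lemma tripleProduct_zero_right (a b : E3) : tripleProduct a b 0 = 0 := by
  simp [tripleProduct_eq]

@[simp] lemma tripleProduct_zero_middle (a c : E3) : tripleProduct a 0 c = 0 := by
  simp [tripleProduct_eq]

lemma tripleProduct_swap_left (a b c : E3) : tripleProduct b a c = -tripleProduct a b c := by
  simp only [tripleProduct_eq]; ring

lemma abs_tripleProduct_le (a b c : E3) : |tripleProduct a b c| ≤ ‖a‖ * (‖b‖ * ‖c‖) :=
  (abs_real_inner_le_norm _ _).trans (by gcongr; exact norm_cross3_le b c)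

-- Cramer's rule. With `p` the solution, `q` its space derivative, and `r` and `s` two consecutive
-- derivatives of high order, it trades the product of `r` and `s` for `⟪p, r⟫` and `⟪p, s⟫`, which
-- are of lower order because `p` is a unit vector.
lemma tripleProduct_eq_of_norm_eq_one {p q : E3} (hp : ‖p‖ = 1) (hpq : ⟪p, q⟫_ℝ = 0) (r s : E3) :
    tripleProduct r q s =
      ⟪p, r⟫_ℝ * tripleProduct p q s - ⟪p, s⟫_ℝ * tripleProduct p q r := by
  have expansion : ‖p‖ ^ 2 * tripleProduct r q s = ⟪p, q⟫_ℝ * tripleProduct r p s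
      + ⟪p, r⟫_ℝ * tripleProduct p q s - ⟪p, s⟫_ℝ * tripleProduct p q r := by
    simp only [tripleProduct_eq, E3_inner_eq, E3_norm_sq_eq]
    ring
  simpa [hp, hpq] using expansion

lemma hasDerivAt_cross3 {f g : ℝ → E3} {f' g' : E3} {x : ℝ} (hf : HasDerivAt f f' x)
    (hg : HasDerivAt g g' x) :
    HasDerivAt (fun y => cross3 (f y) (g y)) (cross3 (f x) g' + cross3 f' (g x)) x :=
  cross3L.hasDerivAt_of_bilinear (fun _ => hf) fun _ => hg

lemma hasDerivAt_tripleProduct {f g h : ℝ → E3} {f' g' h' : E3} {x : ℝ} (hf : HasDerivAt f f' x)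
    (hg : HasDerivAt g g' x) (hh : HasDerivAt h h' x) :
    HasDerivAt (fun y => tripleProduct (f y) (g y) (h y))
      (tripleProduct f' (g x) (h x) + tripleProduct (f x) g' (h x)
        + tripleProduct (f x) (g x) h') x := by
  refine (hf.inner ℝ (hasDerivAt_cross3 hg hh)).congr_deriv ?_
  simp only [tripleProduct, inner_add_right]
  ring

@[fun_prop]
lemma continuous_cross3 {X : Type*} [TopologicalSpace X] {f g : X → E3} (hf : Continuous f)
    (hg : Continuous g) : Continuous fun x => cross3 (f x) (g x) :=
  cross3L.continuous₂.comp (hf.prodMk hg)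

@[fun_prop]
lemma continuous_tripleProduct {X : Type*} [TopologicalSpace X] {f g h : X → E3}
    (hf : Continuous f) (hg : Continuous g) (hh : Continuous h) :
    Continuous fun x => tripleProduct (f x) (g x) (h x) :=
  hf.inner (continuous_cross3 hg hh)

/-! ### Jets and integral inequalities on an interval -/

section Jets

variable {E F G : Type*} [NormedAddCommGroup E] [NormedSpace ℝ E] [NormedAddCommGroup F]
  [NormedSpace ℝ F] [NormedAddCommGroup G] [NormedSpace ℝ G]

/-- A jet: a function `w 0` of a real variable together with all its successive derivatives `w k`.
Carrying the derivatives along avoids iterating `deriv`. -/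
def IsJet (w : ℕ → ℝ → E) : Prop := ∀ k x, HasDerivAt (w k) (w (k + 1) x) x

lemma IsJet.continuous {w : ℕ → ℝ → E} (hw : IsJet w) (k : ℕ) : Continuous (w k) :=
  continuous_iff_continuousAt.2 fun x => (hw k x).continuousAt

lemma isJet_const (c : E) : IsJet fun k (_ : ℝ) => if k = 0 then c else 0 := by
  rintro (_ | k) x <;> simpa using hasDerivAt_const x _

lemma IsJet.leibniz (B : E →L[ℝ] F →L[ℝ] G) {v : ℕ → ℝ → E} {w : ℕ → ℝ → F}
    (hv : IsJet v) (hw : IsJet w) :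
    IsJet fun n x => ∑ ij ∈ antidiagonal n, n.choose ij.1 • B (v ij.1 x) (w ij.2 x) := by
  intro n x
  beta_reduce
  rw [Finset.sum_antidiagonal_choose_succ_nsmul (fun i j => B (v i x) (w j x)),
    ← Finset.sum_add_distrib]
  refine HasDerivAt.fun_sum fun ij hij => ?_
  rw [Nat.choose_symm_of_eq_add (Finset.HasAntidiagonal.mem_antidiagonal.1 hij).symm, ← nsmul_add]
  exact (B.hasDerivAt_of_bilinear (fun _ => hv ij.1 x) fun _ => hw ij.2 x).const_smul
    (n.choose ij.2)

lemma eq_of_hasDerivAt_of_eqOn_Icc {a b x : ℝ} {f g : ℝ → E} {f' g' : E} (hab : a < b)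
    (hfg : EqOn f g (Icc a b)) (hx : x ∈ Icc a b) (hf : HasDerivAt f f' x)
    (hg : HasDerivAt g g' x) : f' = g' :=
  (uniqueDiffOn_Icc hab x hx).eq_deriv _ hf.hasDerivWithinAt
    (hg.hasDerivWithinAt.congr hfg (hfg hx))

lemma IsJet.eqOn_Icc {v w : ℕ → ℝ → E} {a b : ℝ} (hab : a < b) (hv : IsJet v) (hw : IsJet w)
    (h : EqOn (v 0) (w 0) (Icc a b)) (k : ℕ) : EqOn (v k) (w k) (Icc a b) := by
  induction k with
  | zero => exact h
  | succ k ih => exact fun x hx => eq_of_hasDerivAt_of_eqOn_Icc hab ih hx (hv k x) (hw k x)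

end Jets

lemma norm_sum_choose_nsmul_le {E : Type*} [NormedAddCommGroup E] {n : ℕ}
    {s : Finset (ℕ × ℕ)} (hs : s ⊆ antidiagonal n)
    {f : ℕ × ℕ → E} {S : ℝ} (hS : 0 ≤ S) (hf : ∀ ij ∈ s, ‖f ij‖ ≤ S) :
    ‖∑ ij ∈ s, n.choose ij.1 • f ij‖ ≤ 2 ^ n * S :=
  calc ‖∑ ij ∈ s, n.choose ij.1 • f ij‖ ≤ ∑ ij ∈ s, n.choose ij.1 * S := by
        refine norm_sum_le_of_le _ fun ij hij => (norm_nsmul_le).trans ?_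
        gcongr
        exact hf ij hij
    _ ≤ ∑ ij ∈ antidiagonal n, n.choose ij.1 * S :=
        Finset.sum_le_sum_of_subset_of_nonneg hs fun _ _ _ => by positivity
    _ = 2 ^ n * S := by
        rw [← Finset.sum_mul, Finset.Nat.sum_antidiagonal_eq_sum_range_succ_mk]
        exact_mod_cast congrArg (fun N : ℕ => (N : ℝ) * S) (Nat.sum_range_choose n)

lemma abs_integral_le_of_hasDerivAt_sub {a b : ℝ} (hab : a ≤ b) {f r g Q : ℝ → ℝ}
    (hQ : ∀ x ∈ Icc a b, HasDerivAt Q (f x - r x) x) (hends : Q a = Q b) (hf : Continuous f)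
    (hr : Continuous r) (hg : Continuous g) (hrg : ∀ x ∈ Icc a b, |r x| ≤ g x) :
    |∫ x in a..b, f x| ≤ ∫ x in a..b, g x := by
  have hzero : ∫ x in a..b, (f x - r x) = 0 := by
    rw [intervalIntegral.integral_eq_sub_of_hasDerivAt (uIcc_of_le hab ▸ hQ)
      ((by fun_prop : Continuous fun x => f x - r x).intervalIntegrable a b), hends, sub_self]
  rw [intervalIntegral.integral_sub (hf.intervalIntegrable a b) (hr.intervalIntegrable a b),
    sub_eq_zero] at hzero
  rw [hzero, ← Real.norm_eq_abs]
  exact intervalIntegral.norm_integral_le_of_norm_le hab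
    (Eventually.of_forall fun x hx => hrg x (Ioc_subset_Icc_self hx)) (hg.intervalIntegrable a b)

section Sobolev

variable {E : Type*} [NormedAddCommGroup E] [InnerProductSpace ℝ E] {f f' : ℝ → E} {a b : ℝ}

lemma norm_sq_le_norm_sq_add_integral (hf : ∀ x, HasDerivAt f (f' x) x) (hf' : Continuous f')
    {ε : ℝ} (hε : 0 < ε) {x y : ℝ} (hx : x ∈ Icc a b) (hy : y ∈ Icc a b) :
    ‖f x‖ ^ 2 ≤ ‖f y‖ ^ 2 + (ε * (∫ z in a..b, ‖f' z‖ ^ 2) + ε⁻¹ * ∫ z in a..b, ‖f z‖ ^ 2) := by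
  have hfc : Continuous f := continuous_iff_continuousAt.2 fun x => (hf x).continuousAt
  let g : ℝ → ℝ := fun z => ε * ‖f' z‖ ^ 2 + ε⁻¹ * ‖f z‖ ^ 2
  have hg : Continuous g := by fun_prop
  have young : ∀ z, ‖2 * ⟪f z, f' z⟫_ℝ‖ ≤ g z := fun z => by
    have hcs := abs_real_inner_le_norm (f z) (f' z)
    have hsq : ε * ‖f' z‖ ^ 2 + ε⁻¹ * ‖f z‖ ^ 2 - 2 * (‖f z‖ * ‖f' z‖)
        = ε⁻¹ * (ε * ‖f' z‖ - ‖f z‖) ^ 2 := by field_simp; ring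
    have hnonneg : 0 ≤ ε⁻¹ * (ε * ‖f' z‖ - ‖f z‖) ^ 2 := by positivity
    rw [Real.norm_eq_abs, abs_mul, abs_two]
    linarith
  have ftc : ∫ z in y..x, 2 * ⟪f z, f' z⟫_ℝ = ‖f x‖ ^ 2 - ‖f y‖ ^ 2 :=
    intervalIntegral.integral_eq_sub_of_hasDerivAt (fun z _ => (hf z).norm_sq)
      ((by fun_prop : Continuous fun z => 2 * ⟪f z, f' z⟫_ℝ).intervalIntegrable _ _)
  have bound : ‖f x‖ ^ 2 - ‖f y‖ ^ 2 ≤ ∫ z in a..b, g z :=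
    calc ‖f x‖ ^ 2 - ‖f y‖ ^ 2 ≤ ‖∫ z in y..x, 2 * ⟪f z, f' z⟫_ℝ‖ := ftc ▸ le_abs_self _
      _ ≤ |∫ z in y..x, g z| := intervalIntegral.norm_integral_le_abs_of_norm_le
          (Eventually.of_forall fun z => young z) (hg.intervalIntegrable _ _)
      _ ≤ |∫ z in a..b, g z| := intervalIntegral.abs_integral_mono_interval
          (uIoc_subset_uIoc_of_uIcc_subset_uIcc <|
            uIcc_subset_uIcc (Icc_subset_uIcc hy) (Icc_subset_uIcc hx))
          (Eventually.of_forall fun z => by positivity) (hg.intervalIntegrable _ _)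
      _ = ∫ z in a..b, g z := abs_of_nonneg <|
          intervalIntegral.integral_nonneg (hx.1.trans hx.2) fun z _ => by positivity
  rw [intervalIntegral.integral_add ((by fun_prop : Continuous _).intervalIntegrable _ _)
    ((by fun_prop : Continuous _).intervalIntegrable _ _), intervalIntegral.integral_const_mul,
    intervalIntegral.integral_const_mul] at bound
  linarith

lemma norm_sq_le_integral_add_integral (hf : ∀ x, HasDerivAt f (f' x) x) (hf' : Continuous f')
    (hab : a < b) {x : ℝ} (hx : x ∈ Icc a b) :
    ‖f x‖ ^ 2 ≤ ((b - a)⁻¹ + 1) * (∫ z in a..b, ‖f z‖ ^ 2) + ∫ z in a..b, ‖f' z‖ ^ 2 := by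
  have hfc : Continuous f := continuous_iff_continuousAt.2 fun x => (hf x).continuousAt
  have hpos : 0 < b - a := sub_pos.2 hab
  have average := intervalIntegral.integral_mono_on (μ := volume) hab.le
    (continuous_const.intervalIntegrable _ _)
    ((by fun_prop : Continuous fun y => ‖f y‖ ^ 2 + _).intervalIntegrable _ _)
    fun y hy => norm_sq_le_norm_sq_add_integral hf hf' one_pos hx hy
  rw [intervalIntegral.integral_add ((by fun_prop : Continuous _).intervalIntegrable _ _)
    (continuous_const.intervalIntegrable _ _), intervalIntegral.integral_const,
    intervalIntegral.integral_const, smul_eq_mul, smul_eq_mul, ← le_inv_mul_iff₀ hpos, mul_add,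
    inv_mul_cancel_left₀ hpos.ne'] at average
  linarith

lemma IsJet.norm_le_of_integral_norm_sq_le {w : ℕ → ℝ → E} (hw : IsJet w) {n : ℕ} {B : ℝ}
    (hB : ∀ j ≤ n, ∫ x in (0 : ℝ)..1, ‖w j x‖ ^ 2 ≤ B) {j : ℕ} (hj : j < n) {x : ℝ}
    (hx : x ∈ Icc (0 : ℝ) 1) : ‖w j x‖ ≤ 1 + 3 * B := by
  have h := norm_sq_le_integral_add_integral (hw j) (hw.continuous (j + 1)) zero_lt_one hx
  rw [sub_zero, inv_one] at h
  nlinarith [hB j hj.le, hB (j + 1) hj, sq_nonneg (‖w j x‖ - 1), norm_nonneg (w j x)]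

end Sobolev

lemma integral_norm_pow_four_le {E : Type*} [NormedAddCommGroup E] {f : ℝ → E} {a b : ℝ}
    (hf : Continuous f) (hab : a ≤ b) {S : ℝ}
    (hS : ∀ x ∈ Icc a b, ‖f x‖ ^ 2 ≤ S) :
    ∫ x in a..b, ‖f x‖ ^ 4 ≤ S * ∫ x in a..b, ‖f x‖ ^ 2 := by
  rw [← intervalIntegral.integral_const_mul]
  refine intervalIntegral.integral_mono_on hab
    ((by fun_prop : Continuous _).intervalIntegrable _ _)
    ((by fun_prop : Continuous _).intervalIntegrable _ _) fun x hx => ?_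
  calc ‖f x‖ ^ 4 = ‖f x‖ ^ 2 * ‖f x‖ ^ 2 := by ring
    _ ≤ S * ‖f x‖ ^ 2 := by gcongr; exact hS x hx

section QuarticIntegrals

variable {E : Type*} [NormedAddCommGroup E] [InnerProductSpace ℝ E] {f f' : ℝ → E} {a b : ℝ}

lemma integral_norm_pow_four_le_of_eq_zero (hf : ∀ x, HasDerivAt f (f' x) x)
    (hf' : Continuous f') {y : ℝ} (hy : y ∈ Icc a b) (hfy : f y = 0) {S : ℝ} (hS : 0 < S)
    (hfS : ∫ x in a..b, ‖f x‖ ^ 2 ≤ S) {δ : ℝ} (hδ : 0 < δ) :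
    ∫ x in a..b, ‖f x‖ ^ 4 ≤ δ * (∫ x in a..b, ‖f' x‖ ^ 2) + δ⁻¹ * S ^ 3 := by
  have hab : a ≤ b := hy.1.trans hy.2
  have hnonneg : 0 ≤ ∫ x in a..b, ‖f' x‖ ^ 2 :=
    intervalIntegral.integral_nonneg hab fun _ _ => by positivity
  have hsup : ∀ x ∈ Icc a b,
      ‖f x‖ ^ 2 ≤ δ / S * (∫ z in a..b, ‖f' z‖ ^ 2) + (δ / S)⁻¹ * S := fun x hx => by
    refine (norm_sq_le_norm_sq_add_integral hf hf' (div_pos hδ hS) hx hy).trans ?_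
    rw [hfy, norm_zero, zero_pow two_ne_zero, zero_add]
    gcongr
  refine (integral_norm_pow_four_le (continuous_iff_continuousAt.2 fun x => (hf x).continuousAt)
    hab hsup).trans ?_
  calc _ ≤ (δ / S * (∫ z in a..b, ‖f' z‖ ^ 2) + (δ / S)⁻¹ * S) * S := by gcongr
    _ = δ * (∫ x in a..b, ‖f' x‖ ^ 2) + δ⁻¹ * S ^ 3 := by field_simp

lemma integral_norm_sq_deriv_add_pow_four_le (hf : ∀ x, HasDerivAt f (f' x) x)
    (hf' : Continuous f') {M : ℝ} (hM : 1 ≤ M) (hfM : ∫ x in (0 : ℝ)..1, ‖f x‖ ^ 2 ≤ M) :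
    ∫ x in (0 : ℝ)..1, (‖f' x‖ ^ 2 + (M + ‖f x‖) ^ 4) ≤
      32 * M ^ 4 * (1 + ∫ x in (0 : ℝ)..1, ‖f' x‖ ^ 2) := by
  have hfc : Continuous f := continuous_iff_continuousAt.2 fun x => (hf x).continuousAt
  set A := ∫ x in (0 : ℝ)..1, ‖f' x‖ ^ 2
  have hA0 : 0 ≤ A := intervalIntegral.integral_nonneg zero_le_one fun _ _ => by positivity
  have hsup : ∀ x ∈ Icc (0 : ℝ) 1, ‖f x‖ ^ 2 ≤ 2 * M + A := fun x hx => by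
    have h := norm_sq_le_integral_add_integral hf hf' zero_lt_one hx
    rw [sub_zero, inv_one] at h
    linarith
  have hquartic : ∫ x in (0 : ℝ)..1, ‖f x‖ ^ 4 ≤ (2 * M + A) * M :=
    (integral_norm_pow_four_le hfc zero_le_one hsup).trans (by gcongr)
  have hpoint : ∀ x, ‖f' x‖ ^ 2 + (M + ‖f x‖) ^ 4 ≤
      8 * M ^ 4 + (‖f' x‖ ^ 2 + 8 * ‖f x‖ ^ 4) := fun x => by
    have h : (M + ‖f x‖) ^ 4 ≤ 8 * (M ^ 4 + ‖f x‖ ^ 4) :=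
      (add_pow_le (zero_le_one.trans hM) (norm_nonneg (f x)) 4).trans_eq (by norm_num)
    linarith
  have hM1 : M ≤ M ^ 4 := le_self_pow₀ hM (by norm_num)
  have hM2 : M ^ 2 ≤ M ^ 4 := pow_le_pow_right₀ hM (by norm_num)
  have hM0 : 1 ≤ M ^ 4 := one_le_pow₀ hM
  calc _ ≤ ∫ x in (0 : ℝ)..1, (8 * M ^ 4 + (‖f' x‖ ^ 2 + 8 * ‖f x‖ ^ 4)) :=
        intervalIntegral.integral_mono zero_le_one
          ((by fun_prop : Continuous _).intervalIntegrable _ _)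
          ((by fun_prop : Continuous _).intervalIntegrable _ _) hpoint
    _ = 8 * M ^ 4 + (A + 8 * ∫ x in (0 : ℝ)..1, ‖f x‖ ^ 4) := by
        rw [intervalIntegral.integral_add intervalIntegrable_const
            ((by fun_prop : Continuous _).intervalIntegrable _ _),
          intervalIntegral.integral_add ((by fun_prop : Continuous _).intervalIntegrable _ _)
            ((by fun_prop : Continuous _).intervalIntegrable _ _),
          intervalIntegral.integral_const, intervalIntegral.integral_const_mul, sub_zero, one_smul]
    _ ≤ 8 * M ^ 4 + (A + 8 * ((2 * M + A) * M)) := by gcongr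
    _ ≤ 32 * M ^ 4 * (1 + A) := by
        linarith [mul_le_mul_of_nonneg_left hM1 hA0, mul_le_mul_of_nonneg_left hM0 hA0]

end QuarticIntegrals

lemma hasDerivAt_intervalIntegral {E : Type*} [NormedAddCommGroup E] [NormedSpace ℝ E]
    {F F' : ℝ → ℝ → E} (hF : ∀ t, Continuous fun x => F x t)
    (hF' : Continuous fun p : ℝ × ℝ => F' p.1 p.2)
    (hderiv : ∀ x t, HasDerivAt (fun s => F x s) (F' x t) t) (a b t : ℝ) :
    HasDerivAt (fun s => ∫ x in a..b, F x s) (∫ x in a..b, F' x t) t := by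
  have hcompact : IsCompact (uIcc a b ×ˢ Icc (t - 1) (t + 1)) := isCompact_uIcc.prod isCompact_Icc
  obtain ⟨M, hM⟩ := hcompact.exists_bound_of_continuousOn hF'.continuousOn
  exact (intervalIntegral.hasDerivAt_integral_of_dominated_loc_of_deriv_le (μ := volume)
    (F := fun s x => F x s) (F' := fun s x => F' x s) (bound := fun _ => M)
    (Icc_mem_nhds (sub_one_lt t) (lt_add_one t))
    (Eventually.of_forall fun s => (hF s).aestronglyMeasurable)
    ((hF t).intervalIntegrable _ _)
    (by fun_prop : Continuous fun x => F' x t).aestronglyMeasurable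
    (Eventually.of_forall fun x hx s hs => hM (x, s) ⟨uIoc_subset_uIcc hx, hs⟩)
    intervalIntegrable_const
    (Eventually.of_forall fun x _ s _ => hderiv x s)).2

lemma le_gronwallBound_of_abs_deriv_le {f f' : ℝ → ℝ} {A K T : ℝ} (hK : 0 ≤ K)
    (hf : ∀ t ∈ Icc 0 T, HasDerivAt f (f' t) t) (hA : |f 0| ≤ A)
    (hf' : ∀ t ∈ Icc 0 T, |f' t| ≤ K * (1 + |f t|)) {t : ℝ} (ht : t ∈ Icc 0 T) :
    f t ≤ gronwallBound A K K T :=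
  calc f t ≤ ‖f t‖ := le_abs_self _
    _ ≤ gronwallBound A K K (t - 0) := norm_le_gronwallBound_of_norm_deriv_right_le
        (fun s hs => (hf s hs).continuousAt.continuousWithinAt)
        (fun s hs => (hf s (Ico_subset_Icc_self hs)).hasDerivWithinAt) hA
        (fun s hs => (hf' s (Ico_subset_Icc_self hs)).trans_eq (by rw [Real.norm_eq_abs]; ring))
        t ht
    _ ≤ gronwallBound A K K T := by
        rw [sub_zero]
        exact gronwallBound_mono ((abs_nonneg _).trans hA) hK hK ht.2

/-! ### Partial derivatives of smooth fields -/

section PartialDerivatives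

variable {f : ℝ → ℝ → E3}

lemma hasDerivAt_fderiv_fst (hf : ContDiff ℝ ∞ fun p : ℝ × ℝ => f p.1 p.2) (x t : ℝ) :
    HasDerivAt (fun y => f y t) (fderiv ℝ (fun p : ℝ × ℝ => f p.1 p.2) (x, t) (1, 0)) x :=
  (hf.differentiable (by simp) (x, t)).hasFDerivAt.comp_hasDerivAt (f := fun y => (y, t)) x
    ((hasDerivAt_id' x).prodMk (hasDerivAt_const x t))

lemma hasDerivAt_fderiv_snd (hf : ContDiff ℝ ∞ fun p : ℝ × ℝ => f p.1 p.2) (x t : ℝ) :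
    HasDerivAt (fun s => f x s) (fderiv ℝ (fun p : ℝ × ℝ => f p.1 p.2) (x, t) (0, 1)) t :=
  (hf.differentiable (by simp) (x, t)).hasFDerivAt.comp_hasDerivAt (f := fun s => (x, s)) t
    ((hasDerivAt_const t x).prodMk (hasDerivAt_id' t))

lemma pdx_eq_fderiv (hf : ContDiff ℝ ∞ fun p : ℝ × ℝ => f p.1 p.2) :
    (fun p : ℝ × ℝ => pdx f p.1 p.2) =
      fun p => fderiv ℝ (fun p : ℝ × ℝ => f p.1 p.2) p (1, 0) :=
  funext fun p => (hasDerivAt_fderiv_fst hf p.1 p.2).deriv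

lemma pdt_eq_fderiv (hf : ContDiff ℝ ∞ fun p : ℝ × ℝ => f p.1 p.2) :
    (fun p : ℝ × ℝ => pdt f p.1 p.2) =
      fun p => fderiv ℝ (fun p : ℝ × ℝ => f p.1 p.2) p (0, 1) :=
  funext fun p => (hasDerivAt_fderiv_snd hf p.1 p.2).deriv

lemma hasDerivAt_pdx (hf : ContDiff ℝ ∞ fun p : ℝ × ℝ => f p.1 p.2) (x t : ℝ) :
    HasDerivAt (fun y => f y t) (pdx f x t) x :=
  (hasDerivAt_fderiv_fst hf x t).differentiableAt.hasDerivAt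

lemma hasDerivAt_pdt (hf : ContDiff ℝ ∞ fun p : ℝ × ℝ => f p.1 p.2) (x t : ℝ) :
    HasDerivAt (fun s => f x s) (pdt f x t) t :=
  (hasDerivAt_fderiv_snd hf x t).differentiableAt.hasDerivAt

lemma contDiff_pdx (hf : ContDiff ℝ ∞ fun p : ℝ × ℝ => f p.1 p.2) :
    ContDiff ℝ ∞ fun p : ℝ × ℝ => pdx f p.1 p.2 := by
  rw [pdx_eq_fderiv hf]
  exact (hf.fderiv_right (m := ∞) (by simp)).clm_apply contDiff_const

lemma contDiff_pdt (hf : ContDiff ℝ ∞ fun p : ℝ × ℝ => f p.1 p.2) :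
    ContDiff ℝ ∞ fun p : ℝ × ℝ => pdt f p.1 p.2 := by
  rw [pdt_eq_fderiv hf]
  exact (hf.fderiv_right (m := ∞) (by simp)).clm_apply contDiff_const

lemma pdx_pdt_comm (hf : ContDiff ℝ ∞ fun p : ℝ × ℝ => f p.1 p.2) :
    pdx (pdt f) = pdt (pdx f) := by
  funext x t
  have hdiff : DifferentiableAt ℝ (fderiv ℝ fun p : ℝ × ℝ => f p.1 p.2) (x, t) :=
    (hf.fderiv_right (m := ∞) (by simp)).differentiable (by simp) _
  have hsymm : IsSymmSndFDerivAt ℝ (fun p : ℝ × ℝ => f p.1 p.2) (x, t) :=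
    hf.contDiffAt.isSymmSndFDerivAt (by
      rw [minSmoothness_of_isRCLikeNormedField]
      exact WithTop.coe_le_coe.2 le_top)
  rw [congrFun (pdx_eq_fderiv (contDiff_pdt hf)) (x, t),
    congrFun (pdt_eq_fderiv (contDiff_pdx hf)) (x, t), pdx_eq_fderiv hf, pdt_eq_fderiv hf,
    fderiv_clm_apply hdiff (differentiableAt_const _),
    fderiv_clm_apply hdiff (differentiableAt_const _)]
  simpa using hsymm.eq (1, 0) (0, 1)

lemma contDiff_iterate_pdx (hf : ContDiff ℝ ∞ fun p : ℝ × ℝ => f p.1 p.2) (k : ℕ) :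
    ContDiff ℝ ∞ fun p : ℝ × ℝ => pdx^[k] f p.1 p.2 := by
  induction k with
  | zero => exact hf
  | succ k ih => simpa only [Function.iterate_succ_apply'] using contDiff_pdx ih

lemma continuous_iterate_pdx (hf : ContDiff ℝ ∞ fun p : ℝ × ℝ => f p.1 p.2) (k : ℕ) :
    Continuous fun p : ℝ × ℝ => pdx^[k] f p.1 p.2 :=
  (contDiff_iterate_pdx hf k).continuous

lemma continuous_pdt_iterate_pdx (hf : ContDiff ℝ ∞ fun p : ℝ × ℝ => f p.1 p.2) (k : ℕ) :
    Continuous fun p : ℝ × ℝ => pdt (pdx^[k] f) p.1 p.2 :=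
  (contDiff_pdt (contDiff_iterate_pdx hf k)).continuous

lemma hasDerivAt_norm_iterate_pdx_sq (hf : ContDiff ℝ ∞ fun p : ℝ × ℝ => f p.1 p.2) (k : ℕ)
    (x t : ℝ) :
    HasDerivAt (fun s => ‖pdx^[k] f x s‖ ^ 2)
      (2 * ⟪pdx^[k] f x t, pdt (pdx^[k] f) x t⟫_ℝ) t :=
  (hasDerivAt_pdt (contDiff_iterate_pdx hf k) x t).norm_sq

lemma iterate_pdx_pdt (hf : ContDiff ℝ ∞ fun p : ℝ × ℝ => f p.1 p.2) (k : ℕ) :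
    pdx^[k] (pdt f) = pdt (pdx^[k] f) := by
  induction k with
  | zero => rfl
  | succ k ih =>
    rw [Function.iterate_succ_apply', ih, pdx_pdt_comm (contDiff_iterate_pdx hf k),
      Function.iterate_succ_apply']

lemma isJet_iterate_pdx (hf : ContDiff ℝ ∞ fun p : ℝ × ℝ => f p.1 p.2) (t : ℝ) :
    IsJet fun k x => pdx^[k] f x t := fun k x => by
  simpa only [Function.iterate_succ_apply'] using hasDerivAt_pdx (contDiff_iterate_pdx hf k) x t

lemma iterate_deriv_eq_iterate_pdx (f : ℝ → ℝ → E3) (t : ℝ) (k : ℕ) :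
    deriv^[k] (fun x => f x t) = fun x => pdx^[k] f x t := by
  induction k with
  | zero => rfl
  | succ k ih => rw [Function.iterate_succ_apply', ih, Function.iterate_succ_apply']; rfl

end PartialDerivatives

/-! ### Derivatives of unit vector fields -/

section UnitField

variable {E : Type*} [NormedAddCommGroup E] [InnerProductSpace ℝ E] {w : ℕ → ℝ → E} {a b : ℝ}

lemma IsJet.sum_choose_inner_eq_zero (hw : IsJet w) (hab : a < b)
    (hunit : ∀ x ∈ Icc a b, ‖w 0 x‖ = 1) {n : ℕ} (hn : n ≠ 0) {x : ℝ} (hx : x ∈ Icc a b) :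
    ∑ ij ∈ antidiagonal n, n.choose ij.1 • ⟪w ij.1 x, w ij.2 x⟫_ℝ = 0 := by
  let innerL : E →L[ℝ] E →L[ℝ] ℝ := (isBoundedBilinearMap_inner (𝕜 := ℝ)).toContinuousLinearMap
  have h := (hw.leibniz innerL hw).eqOn_Icc hab (isJet_const (1 : ℝ))
    (fun y hy => by simp [innerL, hunit y hy]) n hx
  simpa [innerL, hn] using h

lemma IsJet.two_mul_inner_eq_neg_sum (hw : IsJet w) (hab : a < b)
    (hunit : ∀ x ∈ Icc a b, ‖w 0 x‖ = 1) {n : ℕ} (hn : n ≠ 0) {x : ℝ} (hx : x ∈ Icc a b) :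
    2 * ⟪w 0 x, w n x⟫_ℝ =
      -∑ ij ∈ antidiagonal n with ij.1 ≠ 0 ∧ ij.2 ≠ 0, n.choose ij.1 • ⟪w ij.1 x, w ij.2 x⟫_ℝ := by
  have h := hw.sum_choose_inner_eq_zero hab hunit hn hx
  have hends : {ij ∈ antidiagonal n | ¬(ij.1 ≠ 0 ∧ ij.2 ≠ 0)} =
      ({(0, n), (n, 0)} : Finset (ℕ × ℕ)) := by
    ext ⟨i, j⟩
    simp only [Finset.mem_filter, Finset.HasAntidiagonal.mem_antidiagonal, Finset.mem_insert,
      Finset.mem_singleton, Prod.mk.injEq]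
    omega
  rw [← Finset.sum_filter_add_sum_filter_not (antidiagonal n)
      (fun ij : ℕ × ℕ => ij.1 ≠ 0 ∧ ij.2 ≠ 0), hends,
    Finset.sum_pair (by simp [hn.symm]), real_inner_comm (w 0 x) (w n x)] at h
  simp only [Nat.choose_zero_right, Nat.choose_self, one_smul] at h
  linarith

lemma IsJet.abs_two_mul_inner_le (hw : IsJet w) (hab : a < b)
    (hunit : ∀ x ∈ Icc a b, ‖w 0 x‖ = 1) {n : ℕ} (hn : n ≠ 0) {x : ℝ} (hx : x ∈ Icc a b) {S : ℝ}
    (hS : 0 ≤ S) (h : ∀ i j, i + j = n → i ≠ 0 → j ≠ 0 → ‖w i x‖ * ‖w j x‖ ≤ S) :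
    |2 * ⟪w 0 x, w n x⟫_ℝ| ≤ 2 ^ n * S := by
  rw [hw.two_mul_inner_eq_neg_sum hab hunit hn hx, abs_neg, ← Real.norm_eq_abs]
  refine norm_sum_choose_nsmul_le (Finset.filter_subset _ _) hS fun ij hij => ?_
  obtain ⟨hsum, hi, hj⟩ := Finset.mem_filter.1 hij
  exact (norm_inner_le_norm _ _).trans
    (h _ _ (Finset.HasAntidiagonal.mem_antidiagonal.1 hsum) hi hj)

lemma IsJet.inner_zero_one_eq_zero (hw : IsJet w) (hab : a < b)
    (hunit : ∀ x ∈ Icc a b, ‖w 0 x‖ = 1) {x : ℝ} (hx : x ∈ Icc a b) : ⟪w 0 x, w 1 x⟫_ℝ = 0 := by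
  have h := eq_of_hasDerivAt_of_eqOn_Icc hab (g := fun _ => (1 : ℝ))
    (fun y hy => by simp [hunit y hy]) hx (hw 0 x).norm_sq (hasDerivAt_const x 1)
  simpa using h

lemma IsJet.inner_zero_two_eq (hw : IsJet w) (hab : a < b)
    (hunit : ∀ x ∈ Icc a b, ‖w 0 x‖ = 1) {x : ℝ} (hx : x ∈ Icc a b) :
    ⟪w 0 x, w 2 x⟫_ℝ = -‖w 1 x‖ ^ 2 := by
  have h := eq_of_hasDerivAt_of_eqOn_Icc hab (fun y => hw.inner_zero_one_eq_zero hab hunit) hx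
    ((hw 0 x).inner ℝ (hw 1 x)) (hasDerivAt_const x 0)
  rw [zero_add, real_inner_self_eq_norm_sq] at h
  linarith

lemma IsJet.inner_zero_three_eq (hw : IsJet w) (hab : a < b)
    (hunit : ∀ x ∈ Icc a b, ‖w 0 x‖ = 1) {x : ℝ} (hx : x ∈ Icc a b) :
    ⟪w 0 x, w 3 x⟫_ℝ = -3 * ⟪w 1 x, w 2 x⟫_ℝ := by
  have h := eq_of_hasDerivAt_of_eqOn_Icc hab (fun y => hw.inner_zero_two_eq hab hunit) hx
    ((hw 0 x).inner ℝ (hw 2 x)) (hw 1 x).norm_sq.fun_neg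
  linarith

end UnitField

/-! ### Spatial profiles of the flow -/

/-- The `k`-th space derivative of `w 0 × w 2`, i.e. of the right-hand side of the Schrödinger flow,
in terms of the jet `w` of the solution at a fixed time. -/
def flowVelocity (w : ℕ → ℝ → E3) (k : ℕ) (x : ℝ) : E3 :=
  ∑ ij ∈ antidiagonal k, k.choose ij.1 • cross3 (w ij.1 x) (w (ij.2 + 2) x)

lemma IsJet.flowVelocity {w : ℕ → ℝ → E3} (hw : IsJet w) : IsJet (flowVelocity w) :=
  hw.leibniz cross3L (w := fun k => w (k + 2)) fun k => hw (k + 2)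

lemma inner_flowVelocity (w : ℕ → ℝ → E3) (k : ℕ) (x : ℝ) (a : E3) :
    ⟪a, flowVelocity w k x⟫_ℝ =
      ∑ ij ∈ antidiagonal k, k.choose ij.1 • tripleProduct a (w ij.1 x) (w (ij.2 + 2) x) := by
  simp only [flowVelocity, tripleProduct, inner_sum, ← Nat.cast_smul_eq_nsmul ℝ,
    inner_smul_right_eq_smul]

lemma inner_flowVelocity_one (w : ℕ → ℝ → E3) (x : ℝ) :
    ⟪w 1 x, flowVelocity w 1 x⟫_ℝ = tripleProduct (w 1 x) (w 0 x) (w 3 x) := by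
  simp [inner_flowVelocity, Finset.Nat.sum_antidiagonal_eq_sum_range_succ_mk, Finset.sum_range_succ]

lemma inner_flowVelocity_two (w : ℕ → ℝ → E3) (x : ℝ) :
    ⟪w 2 x, flowVelocity w 2 x⟫_ℝ =
      tripleProduct (w 2 x) (w 0 x) (w 4 x) + 2 * tripleProduct (w 2 x) (w 1 x) (w 3 x) := by
  simp [inner_flowVelocity, Finset.Nat.sum_antidiagonal_eq_sum_range_succ_mk, Finset.sum_range_succ]

lemma inner_flowVelocity_succ (w : ℕ → ℝ → E3) (n : ℕ) (x : ℝ) (a : E3) :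
    ⟪a, flowVelocity w (n + 1) x⟫_ℝ =
      tripleProduct a (w 0 x) (w (n + 3) x) + (n + 1) * tripleProduct a (w 1 x) (w (n + 2) x)
        + ∑ ij ∈ antidiagonal (n + 1) with 2 ≤ ij.1,
            (n + 1).choose ij.1 • tripleProduct a (w ij.1 x) (w (ij.2 + 2) x) := by
  have hlow : ({ij ∈ antidiagonal (n + 1) | ¬2 ≤ ij.1} : Finset (ℕ × ℕ)) =
      {(0, n + 1), (1, n)} := by
    ext ⟨i, j⟩
    simp only [Finset.mem_filter, Finset.HasAntidiagonal.mem_antidiagonal, Finset.mem_insert,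
      Finset.mem_singleton, Prod.mk.injEq]
    omega
  rw [inner_flowVelocity, ← Finset.sum_filter_add_sum_filter_not (antidiagonal (n + 1))
    (fun ij : ℕ × ℕ => 2 ≤ ij.1), hlow, Finset.sum_pair (by simp), add_comm]
  simp

/-- The jet of a unit vector field on `[0,1]` whose derivatives of odd order vanish at the end
points. These are the Neumann conditions of all orders, which the flow propagates from the first
one. -/
structure IsNeumannProfile (w : ℕ → ℝ → E3) : Prop where
  isJet : IsJet w
  norm_eq_one : ∀ x ∈ Icc (0 : ℝ) 1, ‖w 0 x‖ = 1
  odd_left : ∀ k, Odd k → w k 0 = 0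
  odd_right : ∀ k, Odd k → w k 1 = 0

namespace IsSol

variable {T : ℝ} {u : ℝ → ℝ → E3}

lemma pdt_iterate_pdx (hu : IsSol T u) (k : ℕ) {x t : ℝ} (hx : x ∈ Icc (0 : ℝ) 1)
    (ht : t ∈ Icc 0 T) : pdt (pdx^[k] u) x t = flowVelocity (fun k x => pdx^[k] u x t) k x := by
  rw [← iterate_pdx_pdt hu.1]
  refine (isJet_iterate_pdx (contDiff_pdt hu.1) t).eqOn_Icc zero_lt_one
    (isJet_iterate_pdx hu.1 t).flowVelocity (fun y hy => ?_) k hx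
  simpa [flowVelocity] using hu.2.2.1 y hy t ht

lemma odd_iterate_pdx_eq_zero (hu : IsSol T u) (hT : 0 < T) {x : ℝ} (hx : x ∈ Icc (0 : ℝ) 1)
    (hbdry : ∀ t ∈ Icc 0 T, pdx u x t = 0) (k : ℕ) (hk : Odd k) :
    ∀ t ∈ Icc 0 T, pdx^[k] u x t = 0 := by
  induction k using Nat.strong_induction_on with
  | _ k ih =>
  intro t ht
  obtain _ | _ | n := k
  · simp at hk
  · exact hbdry t ht
  have hn : Odd n := by simpa [Nat.odd_add] using hk
  have ih' : ∀ i, Odd i → i < n + 2 → pdx^[i] u x t = 0 := fun i hi hin => ih i hin hi t ht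
  have hjet := isJet_iterate_pdx hu.1 t
  have hunit : ∀ y ∈ Icc (0 : ℝ) 1, ‖pdx^[0] u y t‖ = 1 := fun y hy => hu.2.1 y hy t ht
  refine eq_zero_of_cross3_eq_zero_of_inner_eq_zero (hunit x hx) ?_ ?_
  · have hvelocity : pdt (pdx^[n] u) x t = 0 :=
      eq_of_hasDerivAt_of_eqOn_Icc hT (fun s hs => ih n (by omega) hn s hs) ht
        (hasDerivAt_pdt (contDiff_iterate_pdx hu.1 n) x t) (hasDerivAt_const t 0)
    rw [hu.pdt_iterate_pdx n hx ht, flowVelocity, Finset.sum_eq_single (0, n)] at hvelocity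
    · simpa using hvelocity
    · rintro ⟨i, j⟩ hij hne
      rw [Finset.HasAntidiagonal.mem_antidiagonal] at hij
      obtain hi | hi := Nat.even_or_odd i
      · have hj : pdx^[j + 2] u x t = 0 := ih' _ (by grind) (by grind)
        simp [hj]
      · simp [ih' i hi (by grind)]
    · simp
  · have h := hjet.two_mul_inner_eq_neg_sum zero_lt_one hunit (n := n + 2) (by simp) hx
    rw [Finset.sum_eq_zero] at h
    · simpa using h
    · rintro ⟨i, j⟩ hij
      obtain ⟨hsum, hi0, hj0⟩ := Finset.mem_filter.1 hij
      rw [Finset.HasAntidiagonal.mem_antidiagonal] at hsum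
      obtain hi | hi := Nat.even_or_odd i
      · simp [ih' j (by grind) (by grind)]
      · simp [ih' i hi (by grind)]

lemma isNeumannProfile (hu : IsSol T u) (hT : 0 < T) {t : ℝ} (ht : t ∈ Icc 0 T) :
    IsNeumannProfile fun k x => pdx^[k] u x t where
  isJet := isJet_iterate_pdx hu.1 t
  norm_eq_one x hx := hu.2.1 x hx t ht
  odd_left k hk := hu.odd_iterate_pdx_eq_zero hT (left_mem_Icc.2 zero_le_one)
    (fun s hs => (hu.2.2.2 s hs).1) k hk t ht
  odd_right k hk := hu.odd_iterate_pdx_eq_zero hT (right_mem_Icc.2 zero_le_one)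
    (fun s hs => (hu.2.2.2 s hs).2) k hk t ht

end IsSol

/-! ### Energy identities in low order -/

namespace IsNeumannProfile

variable {w : ℕ → ℝ → E3}

lemma continuous (hw : IsNeumannProfile w) (k : ℕ) : Continuous (w k) := hw.isJet.continuous k

lemma continuous_flowVelocity (hw : IsNeumannProfile w) (k : ℕ) : Continuous (flowVelocity w k) :=
  hw.isJet.flowVelocity.continuous k

lemma integral_inner_flowVelocity_one (hw : IsNeumannProfile w) :
    ∫ x in (0 : ℝ)..1, ⟪w 1 x, flowVelocity w 1 x⟫_ℝ = 0 := by
  have hderiv : ∀ x, HasDerivAt (fun y => tripleProduct (w 1 y) (w 0 y) (w 2 y))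
      ⟪w 1 x, flowVelocity w 1 x⟫_ℝ x := fun x =>
    (hasDerivAt_tripleProduct (hw.isJet 1 x) (hw.isJet 0 x) (hw.isJet 2 x)).congr_deriv <| by
      simp [inner_flowVelocity_one]
  rw [intervalIntegral.integral_eq_sub_of_hasDerivAt (fun x _ => hderiv x)
    (((hw.continuous 1).inner (hw.continuous_flowVelocity 1)).intervalIntegrable _ _)]
  simp [hw.odd_left 1 odd_one, hw.odd_right 1 odd_one]

-- The weights `2` and `5` are forced: they make the top-order terms `‖w 1‖² w 0 · (w 1 × w 3)` and
-- `⟪w 1, w 2⟫ w 0 · (w 1 × w 2)` combine into an exact derivative.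
lemma integral_inner_flowVelocity_two (hw : IsNeumannProfile w) :
    ∫ x in (0 : ℝ)..1, (2 * ⟪w 2 x, flowVelocity w 2 x⟫_ℝ
      - 5 * ‖w 1 x‖ ^ 2 * ⟪w 1 x, flowVelocity w 1 x⟫_ℝ) = 0 := by
  have hc := hw.continuous
  have hv := hw.continuous_flowVelocity
  have hderiv : ∀ x ∈ uIcc (0 : ℝ) 1,
      HasDerivAt (fun y => 2 * tripleProduct (w 2 y) (w 0 y) (w 3 y)
          + 3 * (‖w 1 y‖ ^ 2 * tripleProduct (w 0 y) (w 1 y) (w 2 y)))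
        (2 * ⟪w 2 x, flowVelocity w 2 x⟫_ℝ
          - 5 * ‖w 1 x‖ ^ 2 * ⟪w 1 x, flowVelocity w 1 x⟫_ℝ) x := fun x hx => by
    rw [uIcc_of_le zero_le_one] at hx
    have h01 := hw.isJet.inner_zero_one_eq_zero zero_lt_one hw.norm_eq_one hx
    have h02 := hw.isJet.inner_zero_two_eq zero_lt_one hw.norm_eq_one hx
    have h03 := hw.isJet.inner_zero_three_eq zero_lt_one hw.norm_eq_one hx
    have hcramer := tripleProduct_eq_of_norm_eq_one (hw.norm_eq_one x hx) h01 (w 2 x) (w 3 x)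
    have hd := hw.isJet
    refine (((hasDerivAt_tripleProduct (hd 2 x) (hd 0 x) (hd 3 x)).const_mul 2).add
      (((hd 1 x).norm_sq.mul (hasDerivAt_tripleProduct (hd 0 x) (hd 1 x) (hd 2 x))).const_mul
        3)).congr_deriv ?_
    simp only [inner_flowVelocity_one, inner_flowVelocity_two, tripleProduct_self_left,
      tripleProduct_self_right, tripleProduct_self_outer,
      tripleProduct_swap_left (w 0 x) (w 1 x) (w 3 x)]
    rw [h02, h03] at hcramer
    linear_combination -2 * hcramer
  rw [intervalIntegral.integral_eq_sub_of_hasDerivAt hderiv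
    ((by fun_prop : Continuous _).intervalIntegrable _ _)]
  simp [hw.odd_left 1 odd_one, hw.odd_right 1 odd_one, hw.odd_left 3 (by decide),
    hw.odd_right 3 (by decide)]

end IsNeumannProfile

/-! ### The energy identity in high order -/

/-- The boundary flux of the energy identity of order `n + 1`. Its first term absorbs the
derivatives of order `n + 3`; its second one, those of order `n + 2`. -/
def energyFlux (w : ℕ → ℝ → E3) (n : ℕ) (x : ℝ) : ℝ :=
  tripleProduct (w (n + 1) x) (w 0 x) (w (n + 2) x)
    + n * (⟪w 0 x, w (n + 1) x⟫_ℝ * tripleProduct (w 0 x) (w 1 x) (w (n + 1) x))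

/-- What remains of `⟪w (n + 1), flowVelocity w (n + 1)⟫` after subtracting the derivative of
`energyFlux w n`. It is at most quadratic in the derivative of order `n + 1`. -/
def energyRemainder (w : ℕ → ℝ → E3) (n : ℕ) (x : ℝ) : ℝ :=
  ∑ ij ∈ antidiagonal (n + 1) with 2 ≤ ij.1,
      (n + 1).choose ij.1 • tripleProduct (w (n + 1) x) (w ij.1 x) (w (ij.2 + 2) x)
    - n * ((2 * ⟪w 0 x, w (n + 2) x⟫_ℝ + ⟪w 1 x, w (n + 1) x⟫_ℝ)
          * tripleProduct (w 0 x) (w 1 x) (w (n + 1) x)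
        + ⟪w 0 x, w (n + 1) x⟫_ℝ * tripleProduct (w 0 x) (w 2 x) (w (n + 1) x))

lemma abs_sum_tripleProduct_le {w : ℕ → ℝ → E3} {n : ℕ} {x p : ℝ} (hp : ∀ j ≤ n, ‖w j x‖ ≤ p) :
    |∑ ij ∈ antidiagonal (n + 1) with 2 ≤ ij.1,
        (n + 1).choose ij.1 • tripleProduct (w (n + 1) x) (w ij.1 x) (w (ij.2 + 2) x)| ≤
      2 ^ (n + 1) * (‖w (n + 1) x‖ * p ^ 2) := by
  rw [← Real.norm_eq_abs]
  refine norm_sum_choose_nsmul_le (Finset.filter_subset _ _) (by positivity) fun ⟨i, j⟩ hij => ?_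
  obtain ⟨hsum, hi⟩ := Finset.mem_filter.1 hij
  rw [Finset.HasAntidiagonal.mem_antidiagonal] at hsum
  have hnonneg : 0 ≤ ‖w (n + 1) x‖ * p ^ 2 := by positivity
  obtain rfl | hi2 := eq_or_ne i 2
  · obtain rfl : n = j + 1 := by omega
    simpa using hnonneg
  obtain rfl | hin := eq_or_ne i (n + 1)
  · simpa using hnonneg
  calc |tripleProduct (w (n + 1) x) (w i x) (w (j + 2) x)|
      ≤ ‖w (n + 1) x‖ * (‖w i x‖ * ‖w (j + 2) x‖) := abs_tripleProduct_le _ _ _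
    _ ≤ ‖w (n + 1) x‖ * (p * p) := by
        have hi' := hp i (by simp only at hsum; omega)
        have hj' := hp (j + 2) (by simp only at hsum hi; omega)
        gcongr
        exact (norm_nonneg _).trans hi'
    _ = ‖w (n + 1) x‖ * p ^ 2 := by rw [sq]

namespace IsNeumannProfile

variable {w : ℕ → ℝ → E3}

lemma energyFlux_left (hw : IsNeumannProfile w) (n : ℕ) : energyFlux w n 0 = 0 := by
  obtain hn | hn := Nat.even_or_odd (n + 1)
  · simp [energyFlux, hw.odd_left 1 odd_one, hw.odd_left (n + 2) hn.add_one]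
  · simp [energyFlux, hw.odd_left 1 odd_one, hw.odd_left (n + 1) hn]

lemma energyFlux_right (hw : IsNeumannProfile w) (n : ℕ) : energyFlux w n 1 = 0 := by
  obtain hn | hn := Nat.even_or_odd (n + 1)
  · simp [energyFlux, hw.odd_right 1 odd_one, hw.odd_right (n + 2) hn.add_one]
  · simp [energyFlux, hw.odd_right 1 odd_one, hw.odd_right (n + 1) hn]

lemma hasDerivAt_energyFlux (hw : IsNeumannProfile w) (n : ℕ) {x : ℝ} (hx : x ∈ Icc (0 : ℝ) 1) :
    HasDerivAt (energyFlux w n)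
      (⟪w (n + 1) x, flowVelocity w (n + 1) x⟫_ℝ - energyRemainder w n x) x := by
  have hd := hw.isJet
  have h01 := hd.inner_zero_one_eq_zero zero_lt_one hw.norm_eq_one hx
  have hcramer := tripleProduct_eq_of_norm_eq_one (hw.norm_eq_one x hx) h01
    (w (n + 1) x) (w (n + 2) x)
  refine ((hasDerivAt_tripleProduct (hd (n + 1) x) (hd 0 x) (hd (n + 2) x)).add
    ((((hd 0 x).inner ℝ (hd (n + 1) x)).mul
      (hasDerivAt_tripleProduct (hd 0 x) (hd 1 x) (hd (n + 1) x))).const_mul (n : ℝ))).congr_deriv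
        ?_
  simp only [inner_flowVelocity_succ, energyRemainder, tripleProduct_self_left,
    tripleProduct_self_outer]
  linear_combination -n * hcramer

lemma continuous_energyRemainder (hw : IsNeumannProfile w) (n : ℕ) :
    Continuous (energyRemainder w n) := by
  have hc := hw.continuous
  unfold energyRemainder
  fun_prop

section Remainder

variable {n : ℕ} {M : ℝ} {x : ℝ}

lemma abs_two_mul_inner_succ_le (hw : IsNeumannProfile w) (hn : 2 ≤ n) (hx : x ∈ Icc (0 : ℝ) 1)
    {p : ℝ} (hlow : ∀ j < n, ‖w j x‖ ≤ M) (hp : ∀ j ≤ n, ‖w j x‖ ≤ p) :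
    |2 * ⟪w 0 x, w (n + 1) x⟫_ℝ| ≤ 2 ^ (n + 1) * (M * p) := by
  have hM0 : 0 ≤ M := (norm_nonneg _).trans (hlow 0 (by omega))
  have hp0 : 0 ≤ p := (norm_nonneg _).trans (hp 0 (by omega))
  refine hw.isJet.abs_two_mul_inner_le zero_lt_one hw.norm_eq_one (by omega) hx (by positivity)
    fun i j hij hi hj => ?_
  obtain hin | hjn : i < n ∨ j < n := by omega
  · exact mul_le_mul (hlow i hin) (hp j (by omega)) (norm_nonneg _) hM0
  · rw [mul_comm]
    exact mul_le_mul (hlow j hjn) (hp i (by omega)) (norm_nonneg _) hM0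

lemma abs_two_mul_inner_succ_succ_le (hw : IsNeumannProfile w) (hx : x ∈ Icc (0 : ℝ) 1)
    {p : ℝ} (hone : ‖w 1 x‖ ≤ M) (hp : ∀ j ≤ n, ‖w j x‖ ≤ p) :
    |2 * ⟪w 0 x, w (n + 2) x⟫_ℝ| ≤ 2 ^ (n + 2) * (M * ‖w (n + 1) x‖ + p ^ 2) := by
  have hM0 : 0 ≤ M := (norm_nonneg _).trans hone
  have hp0 : 0 ≤ p := (norm_nonneg _).trans (hp 0 (by omega))
  refine hw.isJet.abs_two_mul_inner_le zero_lt_one hw.norm_eq_one (by omega) hx (by positivity)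
    fun i j hij hi hj => ?_
  have hextreme : ‖w 1 x‖ * ‖w (n + 1) x‖ ≤ M * ‖w (n + 1) x‖ + p ^ 2 := by
    have := mul_le_mul_of_nonneg_right hone (norm_nonneg (w (n + 1) x))
    have := sq_nonneg p
    linarith
  obtain ⟨rfl, rfl⟩ | ⟨rfl, rfl⟩ | ⟨hin, hjn⟩ :
      (i = 1 ∧ j = n + 1) ∨ (i = n + 1 ∧ j = 1) ∨ (i ≤ n ∧ j ≤ n) := by omega
  · exact hextreme
  · rwa [mul_comm]
  · have hprod := mul_le_mul (hp i hin) (hp j hjn) (norm_nonneg _) hp0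
    have : 0 ≤ M * ‖w (n + 1) x‖ := by positivity
    linarith

lemma abs_energyRemainder_le_of_norm_le (hw : IsNeumannProfile w) (hn : 2 ≤ n)
    (hx : x ∈ Icc (0 : ℝ) 1) {p : ℝ} (hlow : ∀ j < n, ‖w j x‖ ≤ M) (hp : ∀ j ≤ n, ‖w j x‖ ≤ p) :
    |energyRemainder w n x| ≤
      2 ^ (n + 1) * (‖w (n + 1) x‖ * p ^ 2)
        + n * ((2 ^ (n + 2) * (M * ‖w (n + 1) x‖ + p ^ 2) + M * ‖w (n + 1) x‖)
            * (M * ‖w (n + 1) x‖) + 2 ^ n * (M * p) * (p * ‖w (n + 1) x‖)) := by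
  have hone := hlow 1 (by omega)
  have hin1 : |⟪w 0 x, w (n + 1) x⟫_ℝ| ≤ 2 ^ n * (M * p) := by
    have h := hw.abs_two_mul_inner_succ_le hn hx hlow hp
    rw [abs_mul, abs_two, pow_succ] at h
    linarith
  have hin2 : |2 * ⟪w 0 x, w (n + 2) x⟫_ℝ + ⟪w 1 x, w (n + 1) x⟫_ℝ| ≤
      2 ^ (n + 2) * (M * ‖w (n + 1) x‖ + p ^ 2) + M * ‖w (n + 1) x‖ :=
    (abs_add_le _ _).trans <| add_le_add (hw.abs_two_mul_inner_succ_succ_le hx hone hp) <|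
      (abs_real_inner_le_norm _ _).trans (by gcongr)
  have htp {c : ℝ} {j : ℕ} (hj : ‖w j x‖ ≤ c) :
      |tripleProduct (w 0 x) (w j x) (w (n + 1) x)| ≤ c * ‖w (n + 1) x‖ :=
    (abs_tripleProduct_le _ _ _).trans (by rw [hw.norm_eq_one x hx, one_mul]; gcongr)
  refine (abs_sub _ _).trans (add_le_add (abs_sum_tripleProduct_le hp) ?_)
  rw [abs_mul, Nat.abs_cast]
  refine mul_le_mul_of_nonneg_left ((abs_add_le _ _).trans ?_) n.cast_nonneg
  rw [abs_mul, abs_mul]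
  exact add_le_add
    (mul_le_mul hin2 (htp hone) (abs_nonneg _) ((abs_nonneg _).trans hin2))
    (mul_le_mul hin1 (htp (hp 2 hn)) (abs_nonneg _) ((abs_nonneg _).trans hin1))

lemma abs_energyRemainder_le (hw : IsNeumannProfile w) (hn : 2 ≤ n) (hx : x ∈ Icc (0 : ℝ) 1)
    (hM : 1 ≤ M) (hlow : ∀ j < n, ‖w j x‖ ≤ M) :
    |energyRemainder w n x| ≤
      (n + 1) * 2 ^ (n + 3) * (M ^ 2 * (‖w (n + 1) x‖ ^ 2 + (M + ‖w n x‖) ^ 4)) := by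
  have hle : ∀ j ≤ n, ‖w j x‖ ≤ M + ‖w n x‖ := fun j hj => by
    obtain rfl | hjn := hj.eq_or_lt
    · linarith
    · linarith [hlow j hjn, norm_nonneg (w n x)]
  refine (hw.abs_energyRemainder_le_of_norm_le hn hx hlow hle).trans ?_
  generalize M + ‖w n x‖ = p
  have ha : 0 ≤ ‖w (n + 1) x‖ := norm_nonneg _
  generalize ‖w (n + 1) x‖ = a at ha ⊢
  have hM2 : M ≤ M ^ 2 := le_self_pow₀ hM two_ne_zero
  have hap : a * p ^ 2 ≤ (a ^ 2 + p ^ 4) / 2 := by linarith [sq_nonneg (a - p ^ 2)]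
  have hmix : M * (a * p ^ 2) ≤ M ^ 2 * (a ^ 2 + p ^ 4) / 2 :=
    (mul_le_mul hM2 hap (by positivity) (by positivity)).trans_eq (by ring)
  have hlinear : a * p ^ 2 ≤ M ^ 2 * (a ^ 2 + p ^ 4) / 2 :=
    (le_mul_of_one_le_left (by positivity) hM).trans hmix
  have hsquare : (M * a) ^ 2 ≤ M ^ 2 * (a ^ 2 + p ^ 4) := by
    rw [mul_pow]; gcongr; exact le_add_of_nonneg_right (by positivity)
  have hs : 0 ≤ M ^ 2 * (a ^ 2 + p ^ 4) := by positivity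
  generalize M ^ 2 * (a ^ 2 + p ^ 4) = s at *
  have hc : (1 : ℝ) ≤ 2 ^ n := one_le_pow₀ one_le_two
  calc _ = 2 * 2 ^ n * (a * p ^ 2)
        + n * ((4 * 2 ^ n + 1) * (M * a) ^ 2 + 5 * 2 ^ n * (M * (a * p ^ 2))) := by ring
    _ ≤ 2 * 2 ^ n * (s / 2) + n * ((4 * 2 ^ n + 2 ^ n) * s + 5 * 2 ^ n * (s / 2)) := by gcongr
    _ = (n * (15 / 2) + 1) * (2 ^ n * s) := by ring
    _ ≤ ((n + 1) * 8) * (2 ^ n * s) := by gcongr; linarith [n.cast_nonneg (α := ℝ)]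
    _ = (n + 1) * 2 ^ (n + 3) * s := by ring

lemma abs_integral_inner_flowVelocity_le (hw : IsNeumannProfile w) (hn : 2 ≤ n) (hM : 1 ≤ M)
    (hlow : ∀ j < n, ∀ x ∈ Icc (0 : ℝ) 1, ‖w j x‖ ≤ M)
    (hmid : ∫ x in (0 : ℝ)..1, ‖w n x‖ ^ 2 ≤ M) :
    |∫ x in (0 : ℝ)..1, ⟪w (n + 1) x, flowVelocity w (n + 1) x⟫_ℝ| ≤
      (n + 1) * 2 ^ (n + 8) * M ^ 6 * (1 + ∫ x in (0 : ℝ)..1, ‖w (n + 1) x‖ ^ 2) := by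
  have hc := hw.continuous
  have hflux := abs_integral_le_of_hasDerivAt_sub zero_le_one
    (fun x hx => hw.hasDerivAt_energyFlux n hx)
    ((hw.energyFlux_left n).trans (hw.energyFlux_right n).symm)
    ((hc (n + 1)).inner (hw.continuous_flowVelocity (n + 1))) (hw.continuous_energyRemainder n)
    (by fun_prop) fun x hx => hw.abs_energyRemainder_le hn hx hM fun j hj => hlow j hj x hx
  rw [intervalIntegral.integral_const_mul, intervalIntegral.integral_const_mul] at hflux
  calc _ ≤ (n + 1) * 2 ^ (n + 3) *
          (M ^ 2 * (32 * M ^ 4 * (1 + ∫ x in (0 : ℝ)..1, ‖w (n + 1) x‖ ^ 2))) := by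
        refine hflux.trans ?_
        gcongr
        exact integral_norm_sq_deriv_add_pow_four_le (hw.isJet n) (hc (n + 1)) hM hmid
    _ = _ := by ring

end Remainder

end IsNeumannProfile

/-! ### Energy bounds along the flow -/

/-- The energy of order `k`: the squared `L²` norm on `[0,1]` of the `k`-th space derivative. -/
def derivEnergy (u : ℝ → ℝ → E3) (k : ℕ) (t : ℝ) : ℝ := L2sq fun x => pdx^[k] u x t

lemma derivEnergy_eq_integral (u : ℝ → ℝ → E3) (k : ℕ) (t : ℝ) :
    derivEnergy u k t = ∫ x in (0 : ℝ)..1, ‖pdx^[k] u x t‖ ^ 2 := rfl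

lemma derivEnergy_nonneg (u : ℝ → ℝ → E3) (k : ℕ) (t : ℝ) : 0 ≤ derivEnergy u k t :=
  intervalIntegral.integral_nonneg zero_le_one fun _ _ => by positivity

lemma Hsq_eq_sum_derivEnergy (n : ℕ) (u : ℝ → ℝ → E3) (t : ℝ) :
    Hsq n (fun x => u x t) = ∑ j ∈ Finset.range (n + 1), derivEnergy u j t := by
  simp only [Hsq, iterate_deriv_eq_iterate_pdx, derivEnergy_eq_integral]

lemma eq_of_hasDerivAt_zero {f : ℝ → ℝ} {T : ℝ} (hf : ∀ t ∈ Icc 0 T, HasDerivAt f 0 t) {t : ℝ}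
    (ht : t ∈ Icc 0 T) : f t = f 0 :=
  constant_of_has_deriv_right_zero (fun s hs => (hf s hs).continuousAt.continuousWithinAt)
    (fun s hs => (hf s (Ico_subset_Icc_self hs)).hasDerivWithinAt) t ht

namespace IsSol

variable {T t : ℝ} {u : ℝ → ℝ → E3}

lemma hasDerivAt_derivEnergy (hu : IsSol T u) (k : ℕ) (ht : t ∈ Icc 0 T) :
    HasDerivAt (derivEnergy u k)
      (2 * ∫ x in (0 : ℝ)..1, ⟪pdx^[k] u x t, flowVelocity (fun j y => pdx^[j] u y t) k x⟫_ℝ)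
      t := by
  have hc := continuous_iterate_pdx hu.1 k
  have hct := continuous_pdt_iterate_pdx hu.1 k
  refine (hasDerivAt_intervalIntegral (fun s => by fun_prop) (by fun_prop)
    (hasDerivAt_norm_iterate_pdx_sq hu.1 k) 0 1 t).congr_deriv ?_
  rw [intervalIntegral.integral_const_mul]
  congr 1
  refine intervalIntegral.integral_congr fun x hx => ?_
  rw [uIcc_of_le zero_le_one] at hx
  simp only [hu.pdt_iterate_pdx k hx ht]

lemma hasDerivAt_integral_norm_pow_four (hu : IsSol T u) (k : ℕ) (ht : t ∈ Icc 0 T) :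
    HasDerivAt (fun s => ∫ x in (0 : ℝ)..1, ‖pdx^[k] u x s‖ ^ 4)
      (4 * ∫ x in (0 : ℝ)..1, ‖pdx^[k] u x t‖ ^ 2 *
        ⟪pdx^[k] u x t, flowVelocity (fun j y => pdx^[j] u y t) k x⟫_ℝ) t := by
  have hc := continuous_iterate_pdx hu.1 k
  have hct := continuous_pdt_iterate_pdx hu.1 k
  have hderiv : ∀ x s, HasDerivAt (fun s => ‖pdx^[k] u x s‖ ^ 4)
      (4 * (‖pdx^[k] u x s‖ ^ 2 * ⟪pdx^[k] u x s, pdt (pdx^[k] u) x s⟫_ℝ)) s := fun x s => by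
    have h := (hasDerivAt_norm_iterate_pdx_sq hu.1 k x s).fun_pow 2
    simp only [← pow_mul] at h
    exact h.congr_deriv (by push_cast; ring)
  refine (hasDerivAt_intervalIntegral (fun s => by fun_prop) (by fun_prop) hderiv 0 1
    t).congr_deriv ?_
  rw [intervalIntegral.integral_const_mul]
  congr 1
  refine intervalIntegral.integral_congr fun x hx => ?_
  rw [uIcc_of_le zero_le_one] at hx
  simp only [hu.pdt_iterate_pdx k hx ht]

lemma derivEnergy_zero_eq_one (hu : IsSol T u) (ht : t ∈ Icc 0 T) : derivEnergy u 0 t = 1 := by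
  rw [derivEnergy_eq_integral, intervalIntegral.integral_congr (g := fun _ => (1 : ℝ))]
  · simp
  · intro x hx
    rw [uIcc_of_le zero_le_one] at hx
    simp [hu.2.1 x hx t ht]

lemma derivEnergy_one_eq (hu : IsSol T u) (hT : 0 < T) (ht : t ∈ Icc 0 T) :
    derivEnergy u 1 t = derivEnergy u 1 0 :=
  eq_of_hasDerivAt_zero (fun s hs => (hu.hasDerivAt_derivEnergy 1 hs).congr_deriv <| by
    rw [(hu.isNeumannProfile hT hs).integral_inner_flowVelocity_one, mul_zero]) ht

lemma derivEnergy_two_sub_eq (hu : IsSol T u) (hT : 0 < T) (ht : t ∈ Icc 0 T) :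
    derivEnergy u 2 t - 5 / 4 * ∫ x in (0 : ℝ)..1, ‖pdx^[1] u x t‖ ^ 4 =
      derivEnergy u 2 0 - 5 / 4 * ∫ x in (0 : ℝ)..1, ‖pdx^[1] u x 0‖ ^ 4 := by
  refine eq_of_hasDerivAt_zero (f := fun s => derivEnergy u 2 s
    - 5 / 4 * ∫ x in (0 : ℝ)..1, ‖pdx^[1] u x s‖ ^ 4) (fun s hs => ?_) ht
  have hw := hu.isNeumannProfile hT hs
  have hc := hw.continuous
  have hv := hw.continuous_flowVelocity
  have h := hw.integral_inner_flowVelocity_two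
  simp only [mul_assoc] at h
  rw [intervalIntegral.integral_sub ((by fun_prop : Continuous _).intervalIntegrable _ _)
    ((by fun_prop : Continuous _).intervalIntegrable _ _), intervalIntegral.integral_const_mul,
    intervalIntegral.integral_const_mul] at h
  refine ((hu.hasDerivAt_derivEnergy 2 hs).fun_sub
    ((hu.hasDerivAt_integral_norm_pow_four 1 hs).const_mul (5 / 4))).congr_deriv ?_
  linarith

lemma derivEnergy_two_le (hu : IsSol T u) (hT : 0 < T) {S : ℝ} (hS : 0 < S)
    (hone : derivEnergy u 1 t ≤ S) (ht : t ∈ Icc 0 T) :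
    derivEnergy u 2 t ≤ 2 * derivEnergy u 2 0 + 25 / 4 * S ^ 3 := by
  have hw := hu.isNeumannProfile hT ht
  have hquartic := integral_norm_pow_four_le_of_eq_zero (hw.isJet 1) (hw.continuous 2)
    (left_mem_Icc.2 zero_le_one) (hw.odd_left 1 odd_one) hS hone
    (by norm_num : (0 : ℝ) < 2 / 5)
  have hinitial : 0 ≤ ∫ x in (0 : ℝ)..1, ‖pdx^[1] u x 0‖ ^ 4 :=
    intervalIntegral.integral_nonneg zero_le_one fun _ _ => by positivity
  have hconserved := hu.derivEnergy_two_sub_eq hT ht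
  rw [← derivEnergy_eq_integral, inv_div] at hquartic
  linarith

lemma abs_deriv_derivEnergy_le (hu : IsSol T u) (hT : 0 < T) {n : ℕ} (hn : 2 ≤ n) {B : ℝ}
    (ht : t ∈ Icc 0 T) (hB : ∀ j ≤ n, derivEnergy u j t ≤ B) :
    |2 * ∫ x in (0 : ℝ)..1, ⟪pdx^[n + 1] u x t,
        flowVelocity (fun j y => pdx^[j] u y t) (n + 1) x⟫_ℝ| ≤
      2 * ((n + 1) * 2 ^ (n + 8) * (1 + 3 * B) ^ 6) * (1 + |derivEnergy u (n + 1) t|) := by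
  have hw := hu.isNeumannProfile hT ht
  have hB0 : 0 ≤ B := (derivEnergy_nonneg u 0 t).trans (hB 0 n.zero_le)
  rw [abs_mul, abs_two, mul_assoc, abs_of_nonneg (derivEnergy_nonneg u _ t)]
  refine mul_le_mul_of_nonneg_left ?_ zero_le_two
  exact hw.abs_integral_inner_flowVelocity_le hn (by linarith)
    (fun j hj x hx => hw.isJet.norm_le_of_integral_norm_sq_le hB hj hx)
    ((hB n le_rfl).trans (by linarith))

end IsSol

lemma exists_derivEnergy_bound_of_lt (k : ℕ) (A B T : ℝ) : ∃ B' : ℝ, ∀ u : ℝ → ℝ → E3, 0 < T →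
    IsSol T u → (∀ j < k, ∀ t ∈ Icc 0 T, derivEnergy u j t ≤ B) → derivEnergy u k 0 ≤ A →
    ∀ t ∈ Icc 0 T, derivEnergy u k t ≤ B' := by
  obtain _ | _ | _ | n := k
  · exact ⟨1, fun u _ hu _ _ t ht => (hu.derivEnergy_zero_eq_one ht).le⟩
  · exact ⟨A, fun u hT hu _ hA t ht => (hu.derivEnergy_one_eq hT ht).trans_le hA⟩
  · refine ⟨2 * A + 25 / 4 * (B + 1) ^ 3, fun u hT hu hB hA t ht => ?_⟩
    have hone : derivEnergy u 1 t ≤ B := hB 1 one_lt_two t ht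
    have hpos : 0 < B + 1 := by linarith [derivEnergy_nonneg u 1 t]
    have h := hu.derivEnergy_two_le hT hpos (by linarith) ht
    linarith
  · let K : ℝ := 2 * ((↑(n + 2) + 1) * 2 ^ (n + 2 + 8) * (1 + 3 * B) ^ 6)
    refine ⟨gronwallBound A K K T, fun u hT hu hB hA t ht => ?_⟩
    exact le_gronwallBound_of_abs_deriv_le (by positivity)
      (fun s hs => hu.hasDerivAt_derivEnergy _ hs)
      (by rwa [abs_of_nonneg (derivEnergy_nonneg u _ 0)])
      (fun s hs => hu.abs_deriv_derivEnergy_le hT (by omega) hs fun j hj => hB j (by omega) s hs) ht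

lemma exists_derivEnergy_bound (m : ℕ) (A T : ℝ) : ∃ B : ℝ, ∀ u : ℝ → ℝ → E3, 0 < T →
    IsSol T u → (∀ k < m, derivEnergy u k 0 ≤ A) →
    ∀ k < m, ∀ t ∈ Icc 0 T, derivEnergy u k t ≤ B := by
  induction m with
  | zero => exact ⟨0, fun u _ _ _ k hk => absurd hk k.not_lt_zero⟩
  | succ m ih =>
    obtain ⟨B, hB⟩ := ih
    obtain ⟨B', hB'⟩ := exists_derivEnergy_bound_of_lt m A B T
    refine ⟨max B B', fun u hT hu hA k hk t ht => ?_⟩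
    have hlow := hB u hT hu fun j hj => hA j (hj.trans m.lt_succ_self)
    obtain hkm | rfl := Nat.lt_succ_iff_lt_or_eq.1 hk
    · exact (hlow k hkm t ht).trans (le_max_left _ _)
    · exact (hB' u hT hu hlow (hA k k.lt_succ_self) t ht).trans (le_max_right _ _)

/-! ### Sobolev norms of the time derivatives -/

lemma Hsq_le_of_norm_iterate_pdx_le {f : ℝ → ℝ → E3}
    (hf : ContDiff ℝ ∞ fun p : ℝ × ℝ => f p.1 p.2) {n : ℕ} {t c : ℝ} {g : ℝ → ℝ}
    (hg : Continuous g) (h : ∀ j ≤ n, ∀ x ∈ Icc (0 : ℝ) 1, ‖pdx^[j] f x t‖ ≤ c * g x) :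
    Hsq n (fun x => f x t) ≤ (n + 1) * (c ^ 2 * ∫ x in (0 : ℝ)..1, g x ^ 2) := by
  have hterm : ∀ j ∈ Finset.range (n + 1),
      derivEnergy f j t ≤ c ^ 2 * ∫ x in (0 : ℝ)..1, g x ^ 2 := by
    intro j hj
    have hc := (isJet_iterate_pdx hf t).continuous j
    rw [← intervalIntegral.integral_const_mul]
    refine intervalIntegral.integral_mono_on zero_le_one
      ((by fun_prop : Continuous fun x => ‖pdx^[j] f x t‖ ^ 2).intervalIntegrable _ _)
      ((by fun_prop : Continuous _).intervalIntegrable _ _) fun x hx => ?_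
    rw [← mul_pow]
    gcongr
    exact h j (Finset.mem_range_succ_iff.1 hj) x hx
  rw [Hsq_eq_sum_derivEnergy]
  simpa using Finset.sum_le_card_nsmul _ _ _ hterm

lemma norm_flowVelocity_le {w : ℕ → ℝ → E3} {k : ℕ} {x M p : ℝ} (hM : ∀ j ≤ k, ‖w j x‖ ≤ M)
    (hp : ∀ j ≤ k + 2, ‖w j x‖ ≤ p) : ‖flowVelocity w k x‖ ≤ 2 ^ k * (M * p) := by
  have hM0 : 0 ≤ M := (norm_nonneg _).trans (hM 0 k.zero_le)
  have hp0 : 0 ≤ p := (norm_nonneg _).trans (hp 0 (Nat.zero_le _))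
  refine norm_sum_choose_nsmul_le subset_rfl (by positivity) fun ⟨i, j⟩ hij => ?_
  rw [Finset.HasAntidiagonal.mem_antidiagonal] at hij
  refine (norm_cross3_le _ _).trans ?_
  have hi := hM i (by simp only at hij; omega)
  have hj := hp (j + 2) (by simp only at hij; omega)
  gcongr

/-- The time derivative of `flowVelocity w k` along the flow, in terms of the jet `w` of the
solution at a fixed time. -/
def flowAcceleration (w : ℕ → ℝ → E3) (k : ℕ) (x : ℝ) : E3 :=
  ∑ ij ∈ antidiagonal k, k.choose ij.1 •
    (cross3 (w ij.1 x) (flowVelocity w (ij.2 + 2) x)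
      + cross3 (flowVelocity w ij.1 x) (w (ij.2 + 2) x))

lemma norm_flowAcceleration_le {w : ℕ → ℝ → E3} {k : ℕ} {x M p : ℝ}
    (hM : ∀ j ≤ k + 2, ‖w j x‖ ≤ M) (hp : ∀ j ≤ k + 4, ‖w j x‖ ≤ p) :
    ‖flowAcceleration w k x‖ ≤ 2 ^ (2 * k + 3) * (M ^ 2 * p) := by
  have hM0 : 0 ≤ M := (norm_nonneg _).trans (hM 0 (Nat.zero_le _))
  have hp0 : 0 ≤ p := (norm_nonneg _).trans (hp 0 (Nat.zero_le _))
  have hV : ∀ j ≤ k + 2, ‖flowVelocity w j x‖ ≤ 2 ^ (k + 2) * (M * p) := fun j hj =>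
    (norm_flowVelocity_le (fun i hi => hM i (hi.trans hj)) fun i hi => hp i (by omega)).trans <| by
      gcongr
      exact one_le_two
  calc ‖flowAcceleration w k x‖ ≤ 2 ^ k * (2 * (M * (2 ^ (k + 2) * (M * p)))) := by
        refine norm_sum_choose_nsmul_le subset_rfl (by positivity) fun ⟨i, j⟩ hij => ?_
        obtain rfl : i + j = k := Finset.HasAntidiagonal.mem_antidiagonal.1 hij
        rw [two_mul]
        refine (norm_add_le _ _).trans (add_le_add ?_ ?_) <;>
          refine (norm_cross3_le _ _).trans ?_
        · exact mul_le_mul (hM i (by omega)) (hV (j + 2) (by omega)) (norm_nonneg _) hM0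
        · rw [mul_comm]
          exact mul_le_mul (hM (j + 2) (by omega)) (hV i (by omega)) (norm_nonneg _) hM0
    _ = 2 ^ (2 * k + 3) * (M ^ 2 * p) := by ring

namespace IsSol

variable {T t : ℝ} {u : ℝ → ℝ → E3}

lemma iterate_pdx_pdt_pdt (hu : IsSol T u) (hT : 0 < T) (k : ℕ) {x : ℝ} (hx : x ∈ Icc (0 : ℝ) 1)
    (ht : t ∈ Icc 0 T) :
    pdx^[k] (pdt (pdt u)) x t = flowAcceleration (fun j y => pdx^[j] u y t) k x := by
  have hderiv : ∀ j, HasDerivAt (fun s => pdx^[j] u x s)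
      (flowVelocity (fun i y => pdx^[i] u y t) j x) t := fun j =>
    (hasDerivAt_pdt (contDiff_iterate_pdx hu.1 j) x t).congr_deriv (hu.pdt_iterate_pdx j hx ht)
  have hvelocity : HasDerivAt (fun s => flowVelocity (fun j y => pdx^[j] u y s) k x)
      (flowAcceleration (fun j y => pdx^[j] u y t) k x) t :=
    HasDerivAt.fun_sum fun ij _ =>
      (hasDerivAt_cross3 (hderiv ij.1) (hderiv (ij.2 + 2))).const_smul (k.choose ij.1)
  rw [iterate_pdx_pdt (contDiff_pdt hu.1), iterate_pdx_pdt hu.1]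
  exact eq_of_hasDerivAt_of_eqOn_Icc hT (fun s hs => hu.pdt_iterate_pdx k hx hs) ht
    (hasDerivAt_pdt (contDiff_pdt (contDiff_iterate_pdx hu.1 k)) x t) hvelocity

lemma norm_iterate_pdx_pdt_le (hu : IsSol T u) {k n : ℕ} (hkn : k ≤ n) {x M p : ℝ}
    (hx : x ∈ Icc (0 : ℝ) 1) (ht : t ∈ Icc 0 T) (hM : ∀ j ≤ n, ‖pdx^[j] u x t‖ ≤ M)
    (hp : ∀ j ≤ n + 2, ‖pdx^[j] u x t‖ ≤ p) : ‖pdx^[k] (pdt u) x t‖ ≤ 2 ^ n * M * p := by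
  have hM0 : 0 ≤ M := (norm_nonneg _).trans (hM 0 (Nat.zero_le _))
  have hp0 : 0 ≤ p := (norm_nonneg _).trans (hp 0 (Nat.zero_le _))
  rw [iterate_pdx_pdt hu.1, hu.pdt_iterate_pdx k hx ht]
  refine (norm_flowVelocity_le (fun i hi => hM i (by omega)) fun i hi => hp i (by omega)).trans ?_
  rw [← mul_assoc]
  gcongr
  exact one_le_two

lemma norm_iterate_pdx_pdt_pdt_le (hu : IsSol T u) (hT : 0 < T) {k n : ℕ} (hkn : k ≤ n)
    {x M p : ℝ} (hx : x ∈ Icc (0 : ℝ) 1) (ht : t ∈ Icc 0 T)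
    (hM : ∀ j ≤ n + 2, ‖pdx^[j] u x t‖ ≤ M) (hp : ∀ j ≤ n + 4, ‖pdx^[j] u x t‖ ≤ p) :
    ‖pdx^[k] (pdt (pdt u)) x t‖ ≤ 2 ^ (2 * n + 3) * M ^ 2 * p := by
  have hp0 : 0 ≤ p := (norm_nonneg _).trans (hp 0 (Nat.zero_le _))
  rw [hu.iterate_pdx_pdt_pdt hT k hx ht]
  refine (norm_flowAcceleration_le (fun i hi => hM i (by omega))
    fun i hi => hp i (by omega)).trans ?_
  rw [← mul_assoc]
  gcongr
  exact one_le_two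

end IsSol

lemma integral_const_add_norm_sq_le {f : ℝ → E3} (hf : Continuous f) (M : ℝ) :
    ∫ x in (0 : ℝ)..1, (M + ‖f x‖) ^ 2 ≤ 2 * (M ^ 2 + L2sq f) :=
  calc ∫ x in (0 : ℝ)..1, (M + ‖f x‖) ^ 2
      ≤ ∫ x in (0 : ℝ)..1, 2 * (M ^ 2 + ‖f x‖ ^ 2) :=
        intervalIntegral.integral_mono zero_le_one
          ((by fun_prop : Continuous _).intervalIntegrable _ _)
          ((by fun_prop : Continuous _).intervalIntegrable _ _) fun x => add_sq_le
    _ = 2 * (M ^ 2 + L2sq f) := by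
        rw [intervalIntegral.integral_const_mul, intervalIntegral.integral_add
          intervalIntegrable_const ((by fun_prop : Continuous _).intervalIntegrable _ _)]
        simp [L2sq]

lemma exists_sum_Hsq_bound (m : ℕ) (B : ℝ) : ∃ C : ℝ, ∀ T > (0 : ℝ), ∀ u : ℝ → ℝ → E3,
    IsSol T u → ∀ t ∈ Icc (0 : ℝ) T, (∀ j ≤ m + 4, derivEnergy u j t ≤ B) →
      Hsq (m + 4) (fun x => u x t) + Hsq (m + 2) (fun x => pdt u x t)
        + Hsq m (fun x => pdt (pdt u) x t) ≤ C := by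
  let M : ℝ := 1 + 3 * B
  let bound : ℕ → ℝ → ℝ := fun n c => (n + 1) * (c ^ 2 * (2 * (M ^ 2 + B)))
  refine ⟨bound (m + 4) 1 + bound (m + 2) (2 ^ (m + 2) * M) + bound m (2 ^ (2 * m + 3) * M ^ 2),
    fun T hT u hu t ht hB => ?_⟩
  have hjet := isJet_iterate_pdx hu.1 t
  have hc := hjet.continuous
  have hB0 : 0 ≤ B := (derivEnergy_nonneg u 0 t).trans (hB 0 (Nat.zero_le _))
  have hlow : ∀ j < m + 4, ∀ x ∈ Icc (0 : ℝ) 1, ‖pdx^[j] u x t‖ ≤ M := fun j hj x hx =>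
    hjet.norm_le_of_integral_norm_sq_le hB hj hx
  let p : ℝ → ℝ := fun x => M + ‖pdx^[m + 4] u x t‖
  have hp : ∀ j ≤ m + 4, ∀ x ∈ Icc (0 : ℝ) 1, ‖pdx^[j] u x t‖ ≤ p x := fun j hj x hx => by
    obtain rfl | hlt := hj.eq_or_lt
    · exact le_add_of_nonneg_left (by positivity)
    · exact (hlow j hlt x hx).trans (le_add_of_nonneg_right (norm_nonneg _))
  have hp_sq : ∫ x in (0 : ℝ)..1, p x ^ 2 ≤ 2 * (M ^ 2 + B) :=
    (integral_const_add_norm_sq_le (hc _) M).trans (by gcongr; exact hB _ le_rfl)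
  have hHsq {f : ℝ → ℝ → E3} (hf : ContDiff ℝ ∞ fun p : ℝ × ℝ => f p.1 p.2) {n : ℕ} {c : ℝ}
      (h : ∀ j ≤ n, ∀ x ∈ Icc (0 : ℝ) 1, ‖pdx^[j] f x t‖ ≤ c * p x) :
      Hsq n (fun x => f x t) ≤ bound n c :=
    (Hsq_le_of_norm_iterate_pdx_le hf (by fun_prop) h).trans (by simp only [bound]; gcongr)
  refine add_le_add_three
    (hHsq hu.1 fun j hj x hx => (hp j hj x hx).trans_eq (one_mul _).symm)
    (hHsq (contDiff_pdt hu.1) fun j hj x hx => ?_)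
    (hHsq (contDiff_pdt (contDiff_pdt hu.1)) fun j hj x hx => ?_)
  · exact hu.norm_iterate_pdx_pdt_le hj hx ht (fun i hi => hlow i (by omega) x hx)
      fun i hi => hp i hi x hx
  · exact hu.norm_iterate_pdx_pdt_pdt_le hT hj hx ht (fun i hi => hlow i (by omega) x hx)
      fun i hi => hp i hi x hx

theorem H5_estimate_schrodinger_flow_general (m : ℕ) :
    ∃ C : ℝ → ℝ → ℝ, ∀ T > (0 : ℝ), ∀ u : ℝ → ℝ → E3, IsSol T u → ∀ t ∈ Icc (0 : ℝ) T,
      Hsq (m + 4) (fun x => u x t) + Hsq (m + 2) (fun x => pdt u x t)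
          + Hsq m (fun x => pdt (pdt u) x t)
        ≤ C (Real.sqrt (Hsq (m + 4) (fun x => u x 0))) T := by
  choose B hB using exists_derivEnergy_bound (m + 5)
  choose C hC using exists_sum_Hsq_bound m
  refine ⟨fun s T => C (B (s ^ 2) T), fun T hT u hu t ht => hC _ T hT u hu t ht
    fun j hj => hB _ T u hT hu (fun k hk => ?_) j (by omega) t ht⟩
  have hnonneg := fun k => derivEnergy_nonneg u k 0
  rw [Hsq_eq_sum_derivEnergy, Real.sq_sqrt (Finset.sum_nonneg fun k _ => hnonneg k)]
  exact Finset.single_le_sum (f := fun k => derivEnergy u k 0) (fun k _ => hnonneg k)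
    (Finset.mem_range.2 hk)

theorem H5_estimate_schrodinger_flow :
    ∃ C : ℝ → ℝ → ℝ, ∀ T > (0:ℝ), ∀ u : ℝ → ℝ → E3, IsSol T u →
      ∀ t ∈ Icc (0:ℝ) T,
        Hsq 5 (fun x => u x t) + Hsq 3 (fun x => pdt u x t)
            + Hsq 1 (fun x => pdt (pdt u) x t)
          ≤ C (Real.sqrt (Hsq 5 (fun x => u x 0))) T := by
  exact H5_estimate_schrodinger_flow_general 1

end
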